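/- If an entire function f has at least p ≥ 2 transcendental singularities of f⁻¹ over finite points, then f⁻¹ has at least p transcendental singularities over ∞. Consequently the number of finite asymptotic values of an entire function is at most the number of its direct singularities over ∞, hence at most 2λ(f) when f has lower order λ(f) ≥ 1/2 (assuming the Denjoy–Carleman–Ahlfors theorem). -/

import Mathlib

/-- A transcendental singularity of `f⁻¹` over a finite point `pt`:
a monotone choice `V ↦ S(V)` of connected components of `f⁻¹(V)` over
neighborhoods `V` of `pt`, with empty total intersection. -/
structure TranscSingOverFin (f : ℂ → ℂ) where
  pt : ℂ
  S : Set ℂ → Set ℂ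
  comp : ∀ V : Set ℂ, IsOpen V → pt ∈ V →
    ∃ z ∈ f ⁻¹' V, S V = connectedComponentIn (f ⁻¹' V) z
  mono : ∀ V₁ V₂ : Set ℂ, IsOpen V₁ → pt ∈ V₁ → IsOpen V₂ → pt ∈ V₂ →
    V₁ ⊆ V₂ → S V₁ ⊆ S V₂
  empty : (⋂ V ∈ {V : Set ℂ | IsOpen V ∧ pt ∈ V}, S V) = ∅

/-- A transcendental singularity of `f⁻¹` over `∞` (for `f` entire):
a monotone choice `R ↦ T(R)` of connected components (tracts) of
`{|f| > R}`, with empty total intersection. -/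
structure TranscSingOverInf (f : ℂ → ℂ) where
  T : ℝ → Set ℂ
  comp : ∀ R : ℝ, ∃ z : ℂ, R < ‖f z‖ ∧
    T R = connectedComponentIn {w : ℂ | R < ‖f w‖} z
  mono : ∀ R₁ R₂ : ℝ, R₁ ≤ R₂ → T R₂ ⊆ T R₁
  empty : (⋂ R : ℝ, T R) = ∅

/-- Two singularities over finite points are distinct if they have disjoint
tracts over some pair of neighborhoods. -/
def FinSingDistinct {f : ℂ → ℂ} (σ τ : TranscSingOverFin f) : Prop :=
  ∃ V W : Set ℂ, IsOpen V ∧ σ.pt ∈ V ∧ IsOpen W ∧ τ.pt ∈ W ∧ σ.S V ∩ τ.S W = ∅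

/-- Two singularities over `∞` are distinct if their tracts are eventually
disjoint. -/
def InfSingDistinct {f : ℂ → ℂ} (σ τ : TranscSingOverInf f) : Prop :=
  ∃ R : ℝ, σ.T R ∩ τ.T R = ∅

/-- The lower order of growth of an entire function,
`λ(f) = liminf_{r→∞} log log M(r,f) / log r`. -/
noncomputable def lowerOrder (f : ℂ → ℂ) : ℝ :=
  Filter.liminf
    (fun r : ℝ =>
      Real.log (Real.log (sSup ((fun z => ‖f z‖) '' Metric.sphere (0 : ℂ) r)))
        / Real.log r) Filter.atTop

namespace Stmt14

open Set Filter Topology Metric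

lemma mem_comp_of_closure {F : Set ℂ} {x z : ℂ} (hx : x ∈ F)
    (hz : z ∈ closure (connectedComponentIn F x)) (hzF : z ∈ F) :
    z ∈ connectedComponentIn F x := by
  have h1 : IsPreconnected (insert z (connectedComponentIn F x)) :=
    isPreconnected_connectedComponentIn.subset_closure (subset_insert _ _)
      (insert_subset hz subset_closure)
  have h2 := h1.subset_connectedComponentIn (x := x) (F := F)
    (mem_insert_of_mem _ (mem_connectedComponentIn hx))
    (insert_subset hzF (connectedComponentIn_subset _ _))
  exact h2 (mem_insert _ _)

/-- Phragmen-Lindelof type maximum principle. -/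
lemma pl {D : Set ℂ} {c : ℂ} {ρ M ε : ℝ} (hρ : 0 < ρ) (hε : 0 < ε)
    (hDρ : ∀ z ∈ D, ρ ≤ ‖z - c‖) {g : ℂ → ℂ} (hg : DiffContOnCl ℂ g D)
    (hM : ∀ z ∈ D, ‖g z‖ ≤ M) (hfr : ∀ z ∈ frontier D, ‖g z‖ ≤ ε) :
    ∀ z ∈ D, ‖g z‖ ≤ ε := by
  intro z hz
  have hM0 : 0 ≤ M := (norm_nonneg _).trans (hM z hz)
  have hclρ : ∀ w ∈ closure D, ρ ≤ ‖w - c‖ := fun w hw =>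
    closure_minimal (t := {w | ρ ≤ ‖w - c‖}) hDρ
      (isClosed_le continuous_const (by fun_prop)) hw
  have hclM : ∀ w ∈ closure D, ‖g w‖ ≤ M := fun w hw => by
    have : (𝓝[D] w).NeBot := mem_closure_iff_nhdsWithin_neBot.1 hw
    exact le_of_tendsto ((hg.continuousOn w hw).mono subset_closure).norm
      (eventually_mem_nhdsWithin.mono hM)
  have key : ∀ n : ℕ, (‖g z‖ / ε) ^ n ≤ ‖z - c‖ / ρ := by
    intro n
    obtain ⟨N, hN1, hN2⟩ : ∃ N : ℝ, ‖z - c‖ < N ∧ M ^ n * ρ / ε ^ n ≤ N :=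
      ⟨max (‖z - c‖ + 1) (M ^ n * ρ / ε ^ n), by
        exact lt_of_lt_of_le (lt_add_one _) (le_max_left _ _), le_max_right _ _⟩
    have hN0 : 0 < N := (norm_nonneg _).trans_lt hN1
    have hd : DiffContOnCl ℂ (fun w => g w ^ n * (w - c)⁻¹) (D ∩ ball c N) := by
      refine ⟨?_, ?_⟩
      · intro w hw
        have hne : w - c ≠ 0 := by
          have := hDρ w hw.1
          exact norm_pos_iff.1 (hρ.trans_le this)
        exact (((hg.differentiableOn w hw.1).mono inter_subset_left).pow n).mul
          (DifferentiableWithinAt.inv (by fun_prop) hne)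
      · intro w hw
        have hw' : w ∈ closure D := closure_mono inter_subset_left hw
        have hne : w - c ≠ 0 := by
          have := hclρ w hw'
          exact norm_pos_iff.1 (hρ.trans_le this)
        exact (((hg.continuousOn w hw').mono (closure_mono inter_subset_left)).pow n).mul
          (ContinuousWithinAt.inv₀ (by fun_prop) hne)
    have h := Complex.norm_le_of_forall_mem_frontier_norm_le (U := D ∩ ball c N)
      (isBounded_ball.subset inter_subset_right) hd (C := ε ^ n / ρ) (by
        intro w hw
        rw [norm_mul, norm_pow, norm_inv]
        rcases frontier_inter_subset _ _ hw with hw | hw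
        · have h1 := hfr w hw.1
          have h2 := hclρ w (frontier_subset_closure hw.1)
          rw [div_eq_mul_inv]
          gcongr
        · have h1 := hclM w hw.1
          have h2 : ‖w - c‖ = N := by
            have := frontier_ball_subset_sphere hw.2
            simpa [dist_eq_norm] using this
          rw [h2]
          calc ‖g w‖ ^ n * N⁻¹ ≤ M ^ n * N⁻¹ := by gcongr
            _ ≤ ε ^ n / ρ := by
              rw [div_le_iff₀ (by positivity)] at hN2
              rw [← div_eq_mul_inv, div_le_div_iff₀ hN0 hρ]
              linarith)
      (z := z) (subset_closure ⟨hz, by simpa [dist_eq_norm] using hN1⟩)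
    rw [norm_mul, norm_pow, norm_inv] at h
    have hz0 : 0 < ‖z - c‖ := hρ.trans_le (hDρ z hz)
    rw [div_pow, div_le_div_iff₀ (by positivity) hρ]
    rw [← div_eq_mul_inv, div_le_div_iff₀ hz0 hρ] at h
    linarith
  by_contra hcon
  push Not at hcon
  have h1 : 1 < ‖g z‖ / ε := by rwa [one_lt_div hε]
  obtain ⟨n, hn⟩ := pow_unbounded_of_one_lt (‖z - c‖ / ρ) h1
  exact absurd (key n) (not_le.2 hn)

lemma hasDerivAt_log {θ h : ℂ → ℂ} {h' z : ℂ} (hc : ContinuousAt θ z)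
    (he : ∀ᶠ w in 𝓝 z, Complex.exp (θ w) = h w) (hh : HasDerivAt h h' z) :
    HasDerivAt θ (h' / h z) z := by
  have := HasDerivAt.of_comp_left hc (Complex.hasDerivAt_exp (θ z)) hh (Complex.exp_ne_zero _) he
  rwa [he.self_of_nhds] at this

lemma const_of_hasDerivAt {s : Set ℂ} (hs : IsOpen s) (hs' : IsPreconnected s) {h : ℂ → ℂ}
    (hd : ∀ z ∈ s, HasDerivAt h 0 z) {x y : ℂ} (hx : x ∈ s) (hy : y ∈ s) : h x = h y :=
  hs.is_const_of_deriv_eq_zero hs' (fun z hz => (hd z hz).differentiableAt.differentiableWithinAt)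
    (fun z hz => (hd z hz).deriv) hx hy

/-- existence of continuous logarithm off an open connected set -/
lemma exists_log {U : Set ℂ} (hU : IsOpen U) (hU' : IsPreconnected U) {w w' : ℂ}
    (hw : w ∈ U) (hw' : w' ∈ U) :
    ∃ β : ℂ → ℂ, ContinuousOn β Uᶜ ∧ ∀ z ∈ Uᶜ, Complex.exp (β z) = (z - w) / (z - w') := by
  refine hU'.induction₂ (fun w w' => ∃ β : ℂ → ℂ, ContinuousOn β Uᶜ ∧
    ∀ z ∈ Uᶜ, Complex.exp (β z) = (z - w) / (z - w')) ?_ ?_ ?_ hw hw'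
  · intro x hx
    obtain ⟨δ, hδ, hb⟩ := Metric.isOpen_iff.1 hU x hx
    filter_upwards [mem_nhdsWithin_of_mem_nhds (ball_mem_nhds x hδ)] with y hy
    have hzx : ∀ z ∈ Uᶜ, δ ≤ ‖z - x‖ := by
      intro z hz
      by_contra hlt
      exact hz (hb (by rw [mem_ball, dist_eq_norm]; linarith))
    have hyx : ‖y - x‖ < δ := by rwa [mem_ball, dist_eq_norm] at hy
    have hne : ∀ z ∈ Uᶜ, z - x ≠ 0 := fun z hz => norm_pos_iff.1 (hδ.trans_le (hzx z hz))
    have hslit : ∀ z ∈ Uᶜ, (z - y) / (z - x) ∈ Complex.slitPlane := by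
      intro z hz
      have h1 : (z - y) / (z - x) = 1 + (-((y - x) / (z - x))) := by
        field_simp [hne z hz]; ring
      rw [h1]
      apply Complex.mem_slitPlane_of_norm_lt_one
      rw [norm_neg, norm_div, div_lt_one (norm_pos_iff.2 (hne z hz))]
      exact hyx.trans_le (hzx z hz)
    refine ⟨fun z => - Complex.log ((z - y) / (z - x)), ?_, ?_⟩
    · refine ContinuousOn.neg (ContinuousOn.clog ?_ hslit)
      exact ContinuousOn.div (by fun_prop) (by fun_prop) hne
    · intro z hz
      rw [Complex.exp_neg, Complex.exp_log (Complex.slitPlane_ne_zero (hslit z hz)), inv_div]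
  · rintro x y z hx hy hz ⟨β, h1, h2⟩ ⟨γ, h3, h4⟩
    refine ⟨fun z => β z + γ z, h1.add h3, fun t ht => ?_⟩
    have : t - y ≠ 0 := sub_ne_zero.2 (fun h => ht (h ▸ hy))
    rw [Complex.exp_add, h2 t ht, h4 t ht]
    field_simp
  · rintro x y hx hy ⟨β, h1, h2⟩
    refine ⟨fun z => - β z, h1.neg, fun t ht => ?_⟩
    rw [Complex.exp_neg, h2 t ht, inv_div]

section tract
variable {f : ℂ → ℂ}

/-- basic facts on tracts over a ball -/
lemma S_open (hf : Continuous f) (σ : TranscSingOverFin f) {r : ℝ} (hr : 0 < r) :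
    IsOpen (σ.S (ball σ.pt r)) := by
  obtain ⟨z, hz, h⟩ := σ.comp (ball σ.pt r) isOpen_ball (mem_ball_self hr)
  rw [h]
  exact (isOpen_ball.preimage hf).connectedComponentIn

lemma S_preconn (σ : TranscSingOverFin f) {r : ℝ} (hr : 0 < r) :
    IsPreconnected (σ.S (ball σ.pt r)) := by
  obtain ⟨z, hz, h⟩ := σ.comp (ball σ.pt r) isOpen_ball (mem_ball_self hr)
  rw [h]
  exact isPreconnected_connectedComponentIn

lemma S_nonempty (σ : TranscSingOverFin f) {r : ℝ} (hr : 0 < r) :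
    (σ.S (ball σ.pt r)).Nonempty := by
  obtain ⟨z, hz, h⟩ := σ.comp (ball σ.pt r) isOpen_ball (mem_ball_self hr)
  rw [h]
  exact ⟨z, mem_connectedComponentIn hz⟩

lemma S_mono (σ : TranscSingOverFin f) {r s : ℝ} (hr : 0 < r) (hrs : r ≤ s) :
    σ.S (ball σ.pt r) ⊆ σ.S (ball σ.pt s) :=
  σ.mono _ _ isOpen_ball (mem_ball_self hr) isOpen_ball (mem_ball_self (hr.trans_le hrs))
    (ball_subset_ball hrs)

lemma S_closure_norm (hf : Continuous f) (σ : TranscSingOverFin f) {r : ℝ} (hr : 0 < r) {z : ℂ}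
    (hz : z ∈ closure (σ.S (ball σ.pt r))) : ‖f z - σ.pt‖ ≤ r := by
  obtain ⟨x, hx, h⟩ := σ.comp (ball σ.pt r) isOpen_ball (mem_ball_self hr)
  refine closure_minimal (t := {w | ‖f w - σ.pt‖ ≤ r}) ?_
      (isClosed_le (by fun_prop) continuous_const) hz
  rw [h]
  intro w hw
  have := connectedComponentIn_subset _ _ hw
  rw [mem_preimage, mem_ball, dist_eq_norm] at this
  exact this.le

lemma S_mem_of_closure (σ : TranscSingOverFin f) {V : Set ℂ} (hV : IsOpen V) (hp : σ.pt ∈ V)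
    {z : ℂ} (hz : z ∈ closure (σ.S V)) (hzV : f z ∈ V) : z ∈ σ.S V := by
  obtain ⟨x, hx, h⟩ := σ.comp V hV hp
  rw [h] at hz ⊢
  exact mem_comp_of_closure hx hz hzV

lemma S_closure_subset (hf : Continuous f) (σ : TranscSingOverFin f) {r s : ℝ} (hr : 0 < r)
    (hrs : r < s) : closure (σ.S (ball σ.pt r)) ⊆ σ.S (ball σ.pt s) := by
  intro z hz
  refine S_mem_of_closure σ isOpen_ball (mem_ball_self (hr.trans hrs))
    (closure_mono (S_mono σ hr hrs.le) hz) ?_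
  rw [mem_ball, dist_eq_norm]
  exact (S_closure_norm hf σ hr hz).trans_lt hrs

lemma escape (hf : Continuous f) (σ : TranscSingOverFin f) {r : ℝ} (hr : 0 < r) (N : ℝ) :
    ∃ n : ℕ, ∀ m ≥ n, ∀ z ∈ σ.S (ball σ.pt (r / (m + 1))), N < ‖z‖ := by
  by_contra hcon
  push Not at hcon
  have hpos : ∀ n : ℕ, 0 < r / ((n : ℝ) + 1) := fun n => by positivity
  have hanti : ∀ n m : ℕ, n ≤ m → r / ((m : ℝ) + 1) ≤ r / ((n : ℝ) + 1) := by
    intro n m h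
    gcongr
  obtain ⟨z, hz⟩ := IsCompact.nonempty_iInter_of_sequence_nonempty_isCompact_isClosed
    (fun n : ℕ => closure (σ.S (ball σ.pt (r / (n + 1)))) ∩ closedBall 0 N)
    (fun n => inter_subset_inter_left _ (closure_mono
      (S_mono σ (hpos (n + 1)) (hanti n (n + 1) (by omega)))))
    (fun n => by
      obtain ⟨m, hm, z, hz, hzN⟩ := hcon n
      exact ⟨z, subset_closure (S_mono σ (hpos m) (hanti n m hm) hz), by simpa using hzN⟩)
    ((isCompact_closedBall _ _).inter_left isClosed_closure)
    (fun n => isClosed_closure.inter isClosed_closedBall)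
  rw [mem_iInter] at hz
  have hlim : Tendsto (fun n : ℕ => r / ((n : ℝ) + 1)) atTop (𝓝 0) :=
    tendsto_const_nhds.div_atTop
      (tendsto_atTop_add_const_right _ _ tendsto_natCast_atTop_atTop)
  have hfz : f z = σ.pt := by
    have : ‖f z - σ.pt‖ ≤ 0 := ge_of_tendsto' hlim fun n => S_closure_norm hf σ (hpos n) (hz n).1
    exact sub_eq_zero.1 (norm_le_zero_iff.1 this)
  have : z ∈ (⋂ V ∈ {V : Set ℂ | IsOpen V ∧ σ.pt ∈ V}, σ.S V) := by
    simp only [mem_iInter]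
    rintro V ⟨hV, hp⟩
    obtain ⟨δ, hδ, hb⟩ := Metric.isOpen_iff.1 hV _ hp
    obtain ⟨n, hn⟩ := (hlim.eventually (gt_mem_nhds hδ)).exists
    refine S_mem_of_closure σ hV hp ?_ (by rwa [hfz])
    exact closure_mono (σ.mono _ _ isOpen_ball (mem_ball_self (hpos n)) hV hp
      ((ball_subset_ball hn.le).trans hb)) (hz n).1
  rw [σ.empty] at this
  exact this

lemma one_sub_slit {z w : ℂ} (h : ‖z‖ < ‖w‖) : 1 - z / w ∈ Complex.slitPlane := by
  rw [sub_eq_add_neg]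
  apply Complex.mem_slitPlane_of_norm_lt_one
  rw [norm_neg, norm_div, div_lt_one ((norm_nonneg _).trans_lt h)]
  exact h

/-- A continuous logarithm near infinity outside a tract. -/
lemma exists_theta (hf : Continuous f) (σ : TranscSingOverFin f) {r : ℝ} (hr : 0 < r) :
    ∃ (θ : ℂ → ℂ) (ρ : ℝ), ∀ z, ρ < ‖z‖ → z ∉ σ.S (ball σ.pt r) →
      ContinuousWithinAt θ (σ.S (ball σ.pt r))ᶜ z ∧ Complex.exp (θ z) = z := by
  obtain ⟨n0, hn0⟩ := escape hf σ hr 0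
  have hpos : ∀ n : ℕ, 0 < r / ((n : ℝ) + 1) := fun n => by positivity
  set B : ℕ → Set ℂ := fun n => σ.S (ball σ.pt (r / ((n0 + n : ℕ) + 1))) with hB
  have hBopen : ∀ n, IsOpen (B n) := fun n => S_open hf σ (hpos _)
  have hBpre : ∀ n, IsPreconnected (B n) := fun n => S_preconn σ (hpos _)
  have hBanti : ∀ n m, n ≤ m → B m ⊆ B n := by
    intro n m h
    apply S_mono σ (hpos _)
    gcongr
  have hB0 : B 0 ⊆ σ.S (ball σ.pt r) := by
    apply S_mono σ (hpos _)
    apply div_le_self hr.le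
    have : (0 : ℝ) ≤ ((n0 + 0 : ℕ) : ℝ) := by positivity
    linarith
  have hB1 : ∀ n, ∀ z ∈ B n, 0 < ‖z‖ := fun n z hz => hn0 (n0 + n) (by omega) z hz
  have hesc : ∀ k : ℕ, ∃ N : ℕ, ∀ m ≥ N, ∀ z ∈ B m, (k : ℝ) < ‖z‖ := by
    intro k
    obtain ⟨n, hn⟩ := escape hf σ hr k
    exact ⟨n, fun m hm z hz => hn (n0 + m) (by omega) z hz⟩
  choose Nf hNf using hesc
  have hne : ∀ n, (B n).Nonempty := fun n => S_nonempty σ (hpos _)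
  choose w hw using hne
  have hw0 : ∀ n, w n ≠ 0 := fun n => norm_pos_iff.1 (hB1 n _ (hw n))
  have hβ : ∀ n, ∃ β : ℂ → ℂ, ContinuousOn β (B n)ᶜ ∧ β 0 = 0 ∧
      ∀ z ∈ (B n)ᶜ, Complex.exp (β z) = (1 - z / w n) / (1 - z / w (n + 1)) := by
    intro n
    obtain ⟨β, h1, h2⟩ := exists_log (hBopen n) (hBpre n) (hw n)
      (hBanti n (n + 1) (by omega) (hw (n + 1)))
    refine ⟨fun z => β z - β 0, h1.sub continuousOn_const, sub_self _, fun z hz => ?_⟩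
    have h0 : (0 : ℂ) ∈ (B n)ᶜ := fun h => by simpa using hB1 n 0 h
    have hz1 : z - w (n + 1) ≠ 0 := sub_ne_zero.2 fun h =>
      hz (h ▸ hBanti n (n + 1) (by omega) (hw (n + 1)))
    have hz2 : w (n + 1) - z ≠ 0 := by
      rw [← neg_sub]; exact neg_ne_zero.2 hz1
    have h3 := hw0 n
    have h4 := hw0 (n + 1)
    have h5 : 1 - z / w (n + 1) ≠ 0 := by
      have : 1 - z / w (n + 1) = (w (n + 1) - z) / w (n + 1) := by field_simp
      rw [this]
      exact div_ne_zero hz2 h4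
    rw [Complex.exp_sub, h2 z hz, h2 0 h0]
    rw [div_div_eq_mul_div, div_eq_div_iff (by simp [h3]) h5]
    field_simp
    ring
  choose β hβc hβ0 hβe using hβ
  set Θ : ℕ → ℂ → ℂ := fun N z => (∑ n ∈ Finset.range N, β n z) + Complex.log (1 - z / w N) with hΘ
  -- step
  have hstep : ∀ k m : ℕ, Nf k ≤ m → ∀ z, ‖z‖ < k → Θ (m + 1) z = Θ m z := by
    intro k m hm z hz
    have hwm : ∀ m, Nf k ≤ m → (k : ℝ) < ‖w m‖ := fun m hm => hNf k m hm _ (hw m)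
    have hsub : ball (0 : ℂ) k ⊆ (B m)ᶜ := by
      intro y hy hyB
      have := hNf k m hm y hyB
      rw [mem_ball_zero_iff] at hy
      linarith
    have hd : ∀ y ∈ ball (0 : ℂ) k, HasDerivAt (fun y => β m y + Complex.log (1 - y / w (m + 1))
        - Complex.log (1 - y / w m)) 0 y := by
      intro y hy
      have hy' : ∀ y ∈ ball (0 : ℂ) k, ∀ n, Nf k ≤ n → 1 - y / w n ∈ Complex.slitPlane := by
        intro y hy n hn
        rw [mem_ball_zero_iff] at hy
        exact one_sub_slit (hy.trans (hwm n hn))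
      have h1 : ContinuousAt (fun y => β m y + Complex.log (1 - y / w (m + 1))
        - Complex.log (1 - y / w m)) y := by
        refine ((((hβc m).mono hsub).continuousAt (isOpen_ball.mem_nhds hy)).add ?_).sub ?_
        · exact ContinuousAt.clog (by fun_prop) (hy' y hy _ (by omega))
        · exact ContinuousAt.clog (by fun_prop) (hy' y hy _ hm)
      have := hasDerivAt_log (h := fun _ => 1) (h' := 0) h1 ?_ (hasDerivAt_const _ _)
      · simpa using this
      · filter_upwards [isOpen_ball.mem_nhds hy] with t ht
        have e1 := Complex.slitPlane_ne_zero (hy' t ht (m + 1) (by omega))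
        have e2 := Complex.slitPlane_ne_zero (hy' t ht m hm)
        rw [Complex.exp_sub, Complex.exp_add, hβe m t (hsub ht), Complex.exp_log e1,
          Complex.exp_log e2, div_mul_cancel₀ _ e1, div_self e2]
    have hz' : z ∈ ball (0 : ℂ) k := by simpa using hz
    have h0' : (0 : ℂ) ∈ ball (0 : ℂ) k := by
      simpa using (norm_nonneg z).trans_lt hz
    have := const_of_hasDerivAt isOpen_ball (convex_ball _ _).isPreconnected hd hz' h0'
    simp only [hβ0, zero_div, sub_zero, Complex.log_one, add_zero] at this
    simp only [hΘ, Finset.sum_range_succ]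
    linear_combination this
  have hconst : ∀ k m : ℕ, Nf k ≤ m → ∀ z, ‖z‖ < k → Θ m z = Θ (Nf k) z := by
    intro k m hm z hz
    induction m, hm using Nat.le_induction with
    | base => rfl
    | succ m hm ih => rw [hstep k m hm z hz, ih]
  set θ : ℂ → ℂ := fun z => Θ (Nf (⌈‖z‖⌉₊ + 1)) z with hθ
  have hceil : ∀ z : ℂ, ‖z‖ < ((⌈‖z‖⌉₊ + 1 : ℕ) : ℝ) := by
    intro z
    push_cast
    linarith [Nat.le_ceil ‖z‖]
  have hθeq : ∀ k : ℕ, ∀ z, ‖z‖ < k → θ z = Θ (Nf k) z := by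
    intro k z hz
    rw [hθ, ← hconst k (max (Nf k) (Nf (⌈‖z‖⌉₊ + 1))) (le_max_left _ _) z hz]
    exact (hconst _ _ (le_max_right _ _) z (hceil z)).symm
  have hΘc : ∀ k : ℕ, ∀ z, ‖z‖ < k → z ∉ B 0 → ContinuousWithinAt (Θ (Nf k)) (B 0)ᶜ z := by
    intro k z hz hzB
    refine ContinuousWithinAt.add ?_ ?_
    · apply tendsto_finsetSum
      intro n _
      have hs : (B 0)ᶜ ⊆ (B n)ᶜ := compl_subset_compl.2 (hBanti 0 n (by omega))
      exact ((hβc n).mono hs) z hzB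
    · refine ContinuousAt.continuousWithinAt (ContinuousAt.clog (by fun_prop) ?_)
      exact one_sub_slit (hz.trans (hNf k _ le_rfl _ (hw _)))
  have hΘe : ∀ z, z ∉ B 0 → ∀ N, (1 - z / w N ≠ 0) →
      Complex.exp (Θ N z) = 1 - z / w 0 := by
    intro z hz N hN
    have hnz : ∀ n, 1 - z / w n ≠ 0 := by
      intro n h
      rw [sub_eq_zero, eq_comm, div_eq_one_iff_eq (hw0 n)] at h
      exact hz (h ▸ hBanti 0 n (by omega) (hw n))
    simp only [hΘ]
    rw [Complex.exp_add, Complex.exp_sum, Complex.exp_log hN]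
    clear hN
    induction N with
    | zero => simp
    | succ N ih =>
      rw [Finset.prod_range_succ, hβe N z (fun h => hz (hBanti 0 N (by omega) h)), mul_assoc,
        div_mul_cancel₀ _ (hnz _), ih]
  have hcont : ∀ z, z ∉ B 0 → ContinuousWithinAt θ (B 0)ᶜ z := by
    intro z hz
    refine (hΘc _ z (hceil z) hz).congr_of_eventuallyEq ?_ (hθeq _ z (hceil z))
    have : {y : ℂ | ‖y‖ < ((⌈‖z‖⌉₊ + 1 : ℕ) : ℝ)} ∈ 𝓝 z :=
      (isOpen_lt continuous_norm continuous_const).mem_nhds (hceil z)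
    filter_upwards [mem_nhdsWithin_of_mem_nhds this] with y hy
    exact hθeq _ y hy
  have hexp : ∀ z, z ∉ B 0 → Complex.exp (θ z) = 1 - z / w 0 := by
    intro z hz
    refine hΘe z hz _ ?_
    exact Complex.slitPlane_ne_zero (one_sub_slit ((hceil z).trans (hNf _ _ le_rfl _ (hw _))))
  refine ⟨fun z => θ z - Complex.log (1 - w 0 / z) + Complex.log (- w 0), ‖w 0‖, fun z hz hzS => ?_⟩
  have hzB : z ∉ B 0 := fun h => hzS (hB0 h)
  have hz0 : z ≠ 0 := norm_pos_iff.1 ((norm_nonneg _).trans_lt hz)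
  have hsl := one_sub_slit hz
  constructor
  · refine (((hcont z hzB).mono (compl_subset_compl.2 hB0)).sub ?_).add continuousWithinAt_const
    refine ContinuousAt.continuousWithinAt (ContinuousAt.clog ?_ hsl)
    exact continuousAt_const.sub (continuousAt_const.div continuousAt_id hz0)
  · have h1 := Complex.slitPlane_ne_zero hsl
    rw [Complex.exp_add, Complex.exp_sub, hexp z hzB, Complex.exp_log h1,
      Complex.exp_log (neg_ne_zero.2 (hw0 0)), div_mul_eq_mul_div, div_eq_iff h1]
    have := hw0 0
    field_simp
    ring

end tract

lemma unbounded_of_sing {f : ℂ → ℂ} (hf : Differentiable ℂ f) (σ : TranscSingOverFin f) (R : ℝ) :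
    ∃ z, R < ‖f z‖ := by
  by_contra hcon
  push Not at hcon
  have hc := hf.apply_eq_apply_of_bounded
    (isBounded_iff_forall_norm_le.2 ⟨R, by rintro _ ⟨z, rfl⟩; exact hcon z⟩)
  have : (0 : ℂ) ∈ (⋂ V ∈ {V : Set ℂ | IsOpen V ∧ σ.pt ∈ V}, σ.S V) := by
    simp only [mem_iInter]
    rintro V ⟨hV, hp⟩
    obtain ⟨z, hz, h⟩ := σ.comp V hV hp
    have : f ⁻¹' V = univ := eq_univ_of_forall fun w => by
      rw [mem_preimage, hc w z]; exact hz
    rw [h, this, connectedComponentIn_univ, PreconnectedSpace.connectedComponent_eq_univ]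
    trivial
  rw [σ.empty] at this
  exact this

lemma unbounded_comp {f : ℂ → ℂ} (hf : Differentiable ℂ f) (hub : ∀ R : ℝ, ∃ z, R < ‖f z‖)
    {R : ℝ} (hR : 0 < R) {z : ℂ} (hz : R < ‖f z‖) (R' : ℝ) :
    ∃ z' ∈ connectedComponentIn {w : ℂ | R < ‖f w‖} z, R' < ‖f z'‖ := by
  by_contra hcon
  push Not at hcon
  obtain ⟨c, hc⟩ : ∃ c, ‖f c‖ < R := by
    by_contra h
    push Not at h
    have hne : ∀ z, f z ≠ 0 := fun z => norm_pos_iff.1 (hR.trans_le (h z))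
    have h1 : Differentiable ℂ (fun z => (f z)⁻¹) := hf.inv hne
    have h2 := h1.apply_eq_apply_of_bounded
      (isBounded_iff_forall_norm_le.2 ⟨R⁻¹, by
        rintro _ ⟨z, rfl⟩
        simp only [norm_inv]
        exact inv_anti₀ hR (h z)⟩)
    obtain ⟨y, hy⟩ := hub ‖f z‖
    have := h2 y z
    simp only [inv_inj] at this
    rw [this] at hy
    exact lt_irrefl _ hy
  have hopen : IsOpen {w : ℂ | R < ‖f w‖} := isOpen_lt continuous_const hf.continuous.norm
  obtain ⟨ρ, hρ, hb⟩ := Metric.isOpen_iff.1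
    (isOpen_lt hf.continuous.norm continuous_const : IsOpen {w : ℂ | ‖f w‖ < R}) c hc
  have hsub := connectedComponentIn_subset {w : ℂ | R < ‖f w‖} z
  have := pl (D := connectedComponentIn {w : ℂ | R < ‖f w‖} z) (c := c) (M := R') hρ hR (by
      intro y hy
      by_contra hlt
      have h1 : ‖f y‖ < R := hb (by rw [mem_ball, dist_eq_norm]; linarith)
      have h2 : R < ‖f y‖ := hsub hy
      linarith) hf.diffContOnCl hcon (by
      intro y hy
      by_contra hlt
      push Not at hlt
      rw [hopen.connectedComponentIn.frontier_eq] at hy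
      exact hy.2 (mem_comp_of_closure hz hy.1 hlt)) z (mem_connectedComponentIn hz)
  linarith

lemma exists_inf {f : ℂ → ℂ} (hf : Differentiable ℂ f) (hub : ∀ R : ℝ, ∃ z, R < ‖f z‖)
    {R : ℝ} (hR : 0 < R) {z : ℂ} (hz : R < ‖f z‖) :
    ∃ τ : TranscSingOverInf f, τ.T R = connectedComponentIn {w : ℂ | R < ‖f w‖} z := by
  have hstep : ∀ (n : ℕ) (y : {y : ℂ // R + n < ‖f y‖}), ∃ y' : {y : ℂ // R + (n + 1 : ℕ) < ‖f y‖},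
      y'.1 ∈ connectedComponentIn {w : ℂ | R + n < ‖f w‖} y.1 := by
    intro n y
    obtain ⟨y', h1, h2⟩ := unbounded_comp hf hub (R := R + n) (by positivity) y.2 (R + (n + 1 : ℕ))
    exact ⟨⟨y', h2⟩, h1⟩
  choose next hnext using hstep
  let s : (n : ℕ) → {y : ℂ // R + n < ‖f y‖} := fun n =>
    Nat.rec (motive := fun n => {y : ℂ // R + n < ‖f y‖}) ⟨z, by simpa using hz⟩ next n
  have hs0 : (s 0).1 = z := rfl
  have hs : ∀ n : ℕ, (s (n + 1)).1 ∈ connectedComponentIn {w : ℂ | R + n < ‖f w‖} (s n).1 :=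
    fun n => hnext n (s n)
  have hle : ∀ R₁ : ℝ, R₁ ≤ R + ⌈R₁ - R⌉₊ := fun R₁ => by linarith [Nat.le_ceil (R₁ - R)]
  have hmem : ∀ R₁ : ℝ, ∀ n ≥ ⌈R₁ - R⌉₊,
      connectedComponentIn {w : ℂ | R₁ < ‖f w‖} (s n).1 =
        connectedComponentIn {w : ℂ | R₁ < ‖f w‖} (s ⌈R₁ - R⌉₊).1 := by
    intro R₁ n hn
    induction n, hn using Nat.le_induction with
    | base => rfl
    | succ n hn ih =>
      rw [← ih]
      refine (connectedComponentIn_eq (connectedComponentIn_mono _ ?_ (hs n))).symm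
      intro w hw
      have h1 := hle R₁
      have h2 : (⌈R₁ - R⌉₊ : ℝ) ≤ n := by exact_mod_cast hn
      have h3 : R + n < ‖f w‖ := hw
      show R₁ < ‖f w‖
      linarith
  refine ⟨⟨fun R₁ => connectedComponentIn {w : ℂ | R₁ < ‖f w‖} (s ⌈R₁ - R⌉₊).1, ?_, ?_, ?_⟩, ?_⟩
  · intro R₁
    exact ⟨_, (hle R₁).trans_lt (s ⌈R₁ - R⌉₊).2, rfl⟩
  · intro R₁ R₂ h
    have : ⌈R₁ - R⌉₊ ≤ ⌈R₂ - R⌉₊ := Nat.ceil_mono (by linarith)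
    rw [← hmem R₁ _ this]
    apply connectedComponentIn_mono
    intro w hw
    exact h.trans_lt hw
  · rw [eq_empty_iff_forall_notMem]
    intro y hy
    have := connectedComponentIn_subset _ _ (mem_iInter.1 hy ‖f y‖)
    exact lt_irrefl ‖f y‖ this
  · have h0 : ⌈R - R⌉₊ = 0 := by simp
    change connectedComponentIn _ (s ⌈R - R⌉₊).1 = _
    rw [h0, hs0]

lemma linalg {p : ℕ} {α : Type*} (W : Set α) (v : α → Fin p → ℂ)
    (hno : ¬ ∃ m : Fin p → ℂ, m ≠ 0 ∧ ∀ z ∈ W, ∑ j, m j * v z j = 0) :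
    ∃ z : Fin p → α, (∀ i, z i ∈ W) ∧ ∀ i j, i ≠ j → v (z i) ≠ v (z j) := by
  have htop : ⊤ ≤ Submodule.span ℂ (v '' W) := by
    by_contra h
    obtain ⟨φ, hφ, hle⟩ := Submodule.exists_le_ker_of_lt_top (Submodule.span ℂ (v '' W))
      (lt_top_iff_ne_top.2 fun e => h e.ge)
    refine hno ⟨fun j => φ (Pi.single j 1), fun h0 => hφ ?_, fun z hz => ?_⟩
    · apply LinearMap.pi_ext'
      intro i
      ext
      simpa using congrFun h0 i
    · have h1 : φ (v z) = 0 := hle (Submodule.subset_span ⟨z, hz, rfl⟩)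
      rw [LinearMap.pi_apply_eq_sum_univ φ (v z)] at h1
      rw [← h1]
      refine Finset.sum_congr rfl fun j _ => ?_
      rw [smul_eq_mul, mul_comm]
      have hs : (Pi.single j 1 : Fin p → ℂ) = fun i => if j = i then 1 else 0 := by
        ext i
        simp [Pi.single_apply, eq_comm]
      rw [← hs]
  let b := Module.Basis.ofSpan htop
  have : Finite _ := Module.Finite.finite_basis b
  have hcard := Module.finrank_eq_nat_card_basis b
  rw [Module.finrank_fin_fun] at hcard
  let e := (Finite.equivFinOfCardEq hcard.symm).symm
  have hb : ∀ i, ∃ z ∈ W, v z = b (e i) := fun i =>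
    Module.Basis.ofSpan_subset htop ⟨e i, rfl⟩
  choose z hz hzv using hb
  refine ⟨z, hz, fun i j hij h => hij ?_⟩
  rw [hzv, hzv] at h
  exact e.injective (b.injective h)

lemma core {f : ℂ → ℂ} (hf : Differentiable ℂ f) {p : ℕ} (σ : Fin p → TranscSingOverFin f)
    (i0 j0 : Fin p) (hij : i0 ≠ j0) {r r' ε : ℝ} (hr' : 0 < r') (hrr : r' < r)
    (hdisj : ∀ j k, j ≠ k →
      Disjoint ((σ j).S (ball (σ j).pt r)) ((σ k).S (ball (σ k).pt r)))
    (hsep : ∀ j k, (σ j).pt = (σ k).pt ∨ 2 * r ≤ ‖(σ j).pt - (σ k).pt‖)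
    (hε : 0 < ε) (hεr : ε < r ^ p)
    (hsmall : ∀ j w, ‖w - (σ j).pt‖ ≤ r' → ‖∏ k, (w - (σ k).pt)‖ < ε)
    (θ : Fin p → ℂ → ℂ) {ρ : ℝ} (hρ : 1 ≤ ρ)
    (hθ : ∀ j z, ρ < ‖z‖ → z ∉ (σ j).S (ball (σ j).pt r') →
      ContinuousWithinAt (θ j) ((σ j).S (ball (σ j).pt r'))ᶜ z ∧ Complex.exp (θ j z) = z)
    (hder : ∀ j z, ρ < ‖z‖ → z ∉ closure ((σ j).S (ball (σ j).pt r')) →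
      HasDerivAt (θ j) z⁻¹ z)
    {R : ℝ} (m : Fin p → ℂ) (hm : m j0 ≠ 0)
    (hrel : ∀ z, R < ‖f z‖ → ∑ j, m j * (θ j z - θ i0 z + 1) = 0) : False := by
  have hfc := hf.continuous
  set Ψ : ℂ → ℂ := fun z => ∑ j, m j * (θ j z - θ i0 z + 1) with hΨ
  set P : ℂ → ℂ := fun z => ∏ k, (f z - (σ k).pt) with hP
  have hPd : Differentiable ℂ P := by
    rw [hP]
    exact Differentiable.fun_finsetProd fun k _ => hf.sub_const _
  have hPc := hPd.continuous
  have hnc : ∀ j z, ε ≤ ‖P z‖ → z ∉ closure ((σ j).S (ball (σ j).pt r')) := by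
    intro j z hz hcl
    have := hsmall j (f z) (S_closure_norm hfc (σ j) hr' hcl)
    linarith
  have hloc : ∀ z, ρ < ‖z‖ → (∀ j, z ∉ closure ((σ j).S (ball (σ j).pt r'))) →
      ∀ᶠ w in 𝓝 z, Ψ w = Ψ z := by
    intro z hz hzc
    have hO : IsOpen ({w : ℂ | ρ < ‖w‖} ∩ ⋂ j, (closure ((σ j).S (ball (σ j).pt r')))ᶜ) :=
      (isOpen_lt continuous_const continuous_norm).inter
        (isOpen_iInter_of_finite fun j => isClosed_closure.isOpen_compl)
    obtain ⟨δ, hδ, hb⟩ := Metric.isOpen_iff.1 hO z ⟨hz, mem_iInter.2 hzc⟩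
    filter_upwards [ball_mem_nhds z hδ] with w hw
    refine const_of_hasDerivAt isOpen_ball (convex_ball z δ).isPreconnected ?_ hw
      (mem_ball_self hδ)
    intro y hy
    have hd : ∀ j, HasDerivAt (θ j) y⁻¹ y := fun j => hder j y (hb hy).1 (mem_iInter.1 (hb hy).2 j)
    have : HasDerivAt Ψ (∑ j, m j * (y⁻¹ - y⁻¹)) y := by
      rw [hΨ]
      exact HasDerivAt.fun_sum fun j _ => (((hd j).sub (hd i0)).add_const 1).const_mul (m j)
    simpa using this
  set ρ1 := ρ + 1 with hρ1
  set D : Set ℂ := {z | ρ1 < ‖z‖ ∧ ε < ‖P z‖ ∧ Ψ z ≠ 0} with hD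
  have hDcl : ∀ z ∈ closure D, ρ1 ≤ ‖z‖ ∧ ε ≤ ‖P z‖ ∧ ‖f z‖ ≤ R := by
    intro z hz
    refine closure_minimal (t := {z | ρ1 ≤ ‖z‖ ∧ ε ≤ ‖P z‖ ∧ ‖f z‖ ≤ R}) ?_ ?_ hz
    · rintro w ⟨h1, h2, h3⟩
      refine ⟨h1.le, h2.le, ?_⟩
      by_contra hlt
      push Not at hlt
      exact h3 (hrel w hlt)
    · exact (isClosed_le continuous_const continuous_norm).inter
        ((isClosed_le continuous_const hPc.norm).inter (isClosed_le hfc.norm continuous_const))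
  have hDfr : ∀ z ∈ frontier D, ‖z‖ = ρ1 ∨ ‖P z‖ = ε := by
    intro z hz
    by_contra hcon
    push Not at hcon
    have hcl := hDcl z hz.1
    have h1 : ρ1 < ‖z‖ := lt_of_le_of_ne hcl.1 (Ne.symm hcon.1)
    have h2 : ε < ‖P z‖ := lt_of_le_of_ne hcl.2.1 (Ne.symm hcon.2)
    have h3 := hloc z (by linarith) (fun j => hnc j z h2.le)
    obtain ⟨w, hwD, hw⟩ := ((mem_closure_iff_frequently.1 hz.1).and_eventually h3).exists
    have h4 : Ψ z ≠ 0 := hw ▸ hwD.2.2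
    apply hz.2
    rw [mem_interior_iff_mem_nhds]
    filter_upwards [h3, (isOpen_lt continuous_const continuous_norm).mem_nhds h1,
      (isOpen_lt continuous_const hPc.norm).mem_nhds h2] with y h5 h6 h7
    exact ⟨h6, h7, by rwa [h5]⟩
  have hre : ∀ j z, ρ < ‖z‖ → z ∉ (σ j).S (ball (σ j).pt r') → (θ j z).re = Real.log ‖z‖ := by
    intro j z hz hzS
    have := congrArg norm (hθ j z hz hzS).2
    rw [Complex.norm_exp] at this
    rw [← this, Real.log_exp]
  -- bound on the circle
  obtain ⟨Bd, hBd⟩ : ∃ Bd, ∀ z ∈ sphere (0 : ℂ) ρ1 \ (σ i0).S (ball (σ i0).pt r'),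
      ‖θ i0 z‖ ≤ Bd := by
    refine IsCompact.exists_bound_of_continuousOn
      ((isCompact_sphere _ _).diff (S_open hfc (σ i0) hr')) ?_
    intro z hz
    have h1 : ρ < ‖z‖ := by
      have := hz.1
      rw [mem_sphere_zero_iff_norm] at this
      linarith
    exact (hθ i0 z h1 hz.2).1.mono (fun y hy => hy.2)
  set M := ∏ k, (R + ‖(σ k).pt‖) with hMdef
  have hPM : ∀ z ∈ closure D, ‖P z‖ ≤ M := by
    intro z hz
    have := (hDcl z hz).2.2
    rw [hP, hMdef, norm_prod]
    refine Finset.prod_le_prod (fun _ _ => norm_nonneg _) fun k _ => ?_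
    exact (norm_sub_le _ _).trans (by linarith)
  have hlog1 : 0 < Real.log ρ1 := Real.log_pos (by linarith)
  set δ := Real.log ρ1 / (|Bd| + 1) ^ 2 with hδ
  have hδ0 : 0 < δ := by positivity
  set C := |M| / (ε * δ) with hC
  have hC0 : 0 ≤ C := by positivity
  have hMC : M * Real.exp (-(C * δ)) ≤ ε := by
    have h1 : C * δ = |M| / ε := by rw [hC]; field_simp
    rw [h1, Real.exp_neg, ← div_eq_mul_inv, div_le_iff₀ (Real.exp_pos _)]
    have h2 := Real.add_one_le_exp (|M| / ε)
    have h3 : |M| = ε * (|M| / ε) := by field_simp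
    have h4 := le_abs_self M
    nlinarith
  set G : ℂ → ℂ := fun z => P z * Complex.exp (-(C * (θ i0 z)⁻¹)) with hG
  have hθne : ∀ z, ρ < ‖z‖ → z ∉ (σ i0).S (ball (σ i0).pt r') → θ i0 z ≠ 0 := by
    intro z hz hzS h0
    have h1 := hre i0 z hz hzS
    have h2 := Real.log_pos (hρ.trans_lt hz)
    rw [h0, Complex.zero_re] at h1
    linarith
  have hGn : ∀ z, ‖G z‖ = ‖P z‖ * Real.exp (-(C * ((θ i0 z)⁻¹).re)) := by
    intro z
    rw [hG, norm_mul, Complex.norm_exp]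
    simp
  have hinvre : ∀ z, ((θ i0 z)⁻¹).re = (θ i0 z).re / ‖θ i0 z‖ ^ 2 := by
    intro z
    rw [Complex.inv_re, Complex.normSq_eq_norm_sq]
  have hclρ : ∀ z ∈ closure D, ρ < ‖z‖ ∧ z ∉ closure ((σ i0).S (ball (σ i0).pt r')) ∧
      z ∉ (σ i0).S (ball (σ i0).pt r') := by
    intro z hz
    have h1 := hDcl z hz
    have h2 := hnc i0 z h1.2.1
    exact ⟨by linarith, h2, fun h => h2 (subset_closure h)⟩
  have hinv0 : ∀ z ∈ closure D, 0 ≤ ((θ i0 z)⁻¹).re := by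
    intro z hz
    obtain ⟨h1, h2, h3⟩ := hclρ z hz
    rw [hinvre, hre i0 z h1 h3]
    have := Real.log_pos (hρ.trans_lt h1)
    positivity
  have hGle : ∀ z ∈ closure D, ‖G z‖ ≤ ‖P z‖ := by
    intro z hz
    rw [hGn]
    apply mul_le_of_le_one_right (norm_nonneg _)
    rw [Real.exp_le_one_iff]
    have := mul_nonneg hC0 (hinv0 z hz)
    linarith
  have hGd : DiffContOnCl ℂ G D := by
    apply DifferentiableOn.diffContOnCl
    intro z hz
    obtain ⟨h1, h2, h3⟩ := hclρ z hz
    apply DifferentiableAt.differentiableWithinAt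
    refine (hPd z).mul (DifferentiableAt.cexp ?_)
    exact (((hder i0 z h1 h2).differentiableAt.inv (hθne z h1 h3)).const_mul _).neg
  have hpl : ∀ z ∈ D, ‖G z‖ ≤ ε := by
    refine pl (c := 0) (ρ := ρ1) (M := M) (by linarith) hε ?_ hGd ?_ ?_
    · intro z hz
      rw [sub_zero]
      exact hz.1.le
    · intro z hz
      exact (hGle z (subset_closure hz)).trans (hPM z (subset_closure hz))
    · intro z hz
      rcases hDfr z hz with h | h
      · obtain ⟨h1, h2, h3⟩ := hclρ z hz.1
        have hB := hBd z ⟨by simpa using h, h3⟩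
        have hlow : δ ≤ ((θ i0 z)⁻¹).re := by
          rw [hinvre, hre i0 z h1 h3, h, hδ]
          have h5 := norm_pos_iff.2 (hθne z h1 h3)
          have h6 := le_abs_self Bd
          gcongr
          linarith
        rw [hGn]
        refine le_trans ?_ hMC
        have h7 := hPM z hz.1
        have h8 : -(C * ((θ i0 z)⁻¹).re) ≤ -(C * δ) := by
          have := mul_le_mul_of_nonneg_left hlow hC0
          linarith
        exact mul_le_mul h7 (Real.exp_le_exp.2 h8) (Real.exp_pos _).le
          ((norm_nonneg _).trans h7)
      · exact (hGle z hz.1).trans h.le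
  have hPD : ∀ z ∈ D, ‖P z‖ ≤ ε * Real.exp (C / Real.log ‖z‖) := by
    intro z hz
    have h := hpl z hz
    obtain ⟨h1, h2, h3⟩ := hclρ z (subset_closure hz)
    have hl := Real.log_pos (hρ.trans_lt h1)
    have hup : ((θ i0 z)⁻¹).re ≤ 1 / Real.log ‖z‖ := by
      refine (Complex.re_le_norm _).trans ?_
      rw [norm_inv, one_div]
      apply inv_anti₀ hl
      rw [← hre i0 z h1 h3]
      exact Complex.re_le_norm _
    rw [hGn, Real.exp_neg, ← div_eq_mul_inv, div_le_iff₀ (Real.exp_pos _)] at h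
    refine h.trans ?_
    gcongr
    calc C * ((θ i0 z)⁻¹).re ≤ C * (1 / Real.log ‖z‖) := by gcongr
      _ = C / Real.log ‖z‖ := by ring
  have hlim : Tendsto (fun x : ℝ => ε * Real.exp (C / Real.log x)) atTop (𝓝 (ε * Real.exp 0)) :=
    ((Real.continuous_exp.tendsto 0).comp
      (tendsto_const_nhds.div_atTop Real.tendsto_log_atTop)).const_mul ε
  rw [Real.exp_zero, mul_one] at hlim
  obtain ⟨ρ2, hρ2⟩ := (((hlim.eventually (gt_mem_nhds hεr)).and
    (eventually_gt_atTop ρ1))).exists_forall_of_atTop.imp fun _ h => h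
  have hρ21 := (hρ2 ρ2 le_rfl).2
  -- the tract boundary
  set U := (σ j0).S (ball (σ j0).pt r) with hU
  have hr : 0 < r := hr'.trans hrr
  have hUo : IsOpen U := S_open hfc (σ j0) hr
  have hcls : ∀ j, closure ((σ j).S (ball (σ j).pt r')) ⊆ (σ j).S (ball (σ j).pt r) :=
    fun j => S_closure_subset hfc (σ j) hr' hrr
  have hfrU : ∀ z ∈ frontier U, ∀ j, z ∉ closure ((σ j).S (ball (σ j).pt r')) := by
    intro z hz j hzj
    have h1 := hcls j hzj
    by_cases hj : j = j0
    · subst hj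
      rw [hUo.frontier_eq] at hz
      exact hz.2 h1
    · have h2 := (hdisj j j0 hj).closure_right (S_open hfc (σ j) hr)
      exact disjoint_left.1 h2 h1 hz.1
  have hΨ0 : ∀ z ∈ frontier U, ρ2 ≤ ‖z‖ → Ψ z = 0 := by
    intro z hz hzρ
    by_contra hne
    have hρz := hρ2 _ hzρ
    have hfz1 : ‖f z - (σ j0).pt‖ ≤ r := S_closure_norm hfc (σ j0) hr hz.1
    have hfz2 : r ≤ ‖f z - (σ j0).pt‖ := by
      by_contra hlt
      push Not at hlt
      rw [hUo.frontier_eq] at hz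
      exact hz.2 (S_mem_of_closure (σ j0) isOpen_ball (mem_ball_self hr) hz.1
        (by rwa [mem_ball, dist_eq_norm]))
    have hPz : r ^ p ≤ ‖P z‖ := by
      rw [hP, norm_prod]
      calc r ^ p = ∏ _k : Fin p, r := by simp
        _ ≤ _ := by
          refine Finset.prod_le_prod (fun _ _ => hr.le) fun k _ => ?_
          rcases hsep k j0 with h | h
          · rw [h]; exact hfz2
          · have : ‖(σ k).pt - (σ j0).pt‖ ≤ ‖f z - (σ j0).pt‖ + ‖f z - (σ k).pt‖ := by
              have e : (σ k).pt - (σ j0).pt = (f z - (σ j0).pt) - (f z - (σ k).pt) := by ring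
              rw [e]
              exact norm_sub_le _ _
            linarith
    have := hPD z ⟨hρz.2, by linarith, hne⟩
    linarith [hρz.1]
  -- the primitive of 1/z
  classical
  set X : ℂ → ℂ := fun z => ∑ j ∈ Finset.univ.erase j0, m j * (θ j z - θ i0 z + 1) with hX
  have hΨX : ∀ z, Ψ z = m j0 * (θ j0 z - θ i0 z + 1) + X z := by
    intro z
    rw [hΨ, hX]
    exact (Finset.add_sum_erase _ _ (Finset.mem_univ j0)).symm
  set L : ℂ → ℂ := fun z => if z ∈ U then θ i0 z - 1 - (m j0)⁻¹ * X z else θ j0 z with hL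
  have hLd : ∀ z, ρ2 ≤ ‖z‖ → HasDerivAt L z⁻¹ z := by
    intro z hz
    have hzρ : ρ < ‖z‖ := by linarith
    by_cases hzU : z ∈ U
    · have hd : ∀ j, j ≠ j0 → HasDerivAt (θ j) z⁻¹ z := fun j hj =>
        hder j z hzρ fun h => disjoint_left.1 (hdisj j j0 hj) (hcls j h) hzU
      have h1 : HasDerivAt X (∑ j ∈ Finset.univ.erase j0, m j * (z⁻¹ - z⁻¹)) z := by
        rw [hX]
        exact HasDerivAt.fun_sum fun j hj =>
          (((hd j (Finset.ne_of_mem_erase hj)).sub (hd i0 hij)).add_const 1).const_mul (m j)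
      have h2 := ((hd i0 hij).sub_const 1).sub (h1.const_mul (m j0)⁻¹)
      simp only [sub_self, mul_zero, Finset.sum_const_zero, sub_zero] at h2
      refine h2.congr_of_eventuallyEq ?_
      filter_upwards [hUo.mem_nhds hzU] with y hy
      simp [hL, hy]
    · by_cases hzc : z ∈ closure U
      · have hzf : z ∈ frontier U := by
          rw [hUo.frontier_eq]; exact ⟨hzc, hzU⟩
        have hnotc := hfrU z hzf
        refine (hder j0 z hzρ (hnotc j0)).congr_of_eventuallyEq ?_
        filter_upwards [hloc z hzρ hnotc] with y hy
        rw [hΨ0 z hzf hz, hΨX y] at hy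
        by_cases hyU : y ∈ U
        · simp only [hL, hyU, if_true]
          have h3 : X y = - (m j0 * (θ j0 y - θ i0 y + 1)) := by linear_combination hy
          rw [h3]
          field_simp
          ring
        · simp [hL, hyU]
      · refine (hder j0 z hzρ fun h => hzU (hcls j0 h)).congr_of_eventuallyEq ?_
        filter_upwards [isClosed_closure.isOpen_compl.mem_nhds hzc] with y hy
        have : y ∉ U := fun h => hy (subset_closure h)
        simp [hL, this]
  have hρ20 : 0 < ρ2 := by linarith
  have hint := circleIntegral.integral_eq_zero_of_hasDerivWithinAt (f := L) (f' := fun z => z⁻¹)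
    (c := 0) hρ20.le (fun z hz => (hLd z (by
      rw [mem_sphere_zero_iff_norm] at hz
      exact hz.ge)).hasDerivWithinAt)
  have h2 := circleIntegral.integral_sub_center_inv 0 hρ20.ne'
  simp only [sub_zero] at h2
  rw [hint] at h2
  have := Complex.two_pi_I_ne_zero
  exact this h2.symm

lemma exists_tau {f : ℂ → ℂ} (hf : Differentiable ℂ f) {p : ℕ} (hp : 2 ≤ p)
    (σ : Fin p → TranscSingOverFin f)
    (hdist : ∀ j k, j ≠ k → FinSingDistinct (σ j) (σ k)) :
    ∃ τ : Fin p → TranscSingOverInf f, ∀ j k, j ≠ k → InfSingDistinct (τ j) (τ k) := by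
  have hfc := hf.continuous
  let i0 : Fin p := ⟨0, by omega⟩
  have hub := unbounded_of_sing hf (σ i0)
  have hlt : ∀ δ : ℝ, 0 < δ → ∀ᶠ r in 𝓝[>] (0 : ℝ), r < δ := fun δ hδ =>
    mem_nhdsWithin_of_mem_nhds (gt_mem_nhds hδ)
  -- choice of r
  obtain ⟨r, hr, hrjk⟩ : ∃ r : ℝ, 0 < r ∧ ∀ j k,
      (j ≠ k → Disjoint ((σ j).S (ball (σ j).pt r)) ((σ k).S (ball (σ k).pt r))) ∧
      ((σ j).pt = (σ k).pt ∨ 2 * r ≤ ‖(σ j).pt - (σ k).pt‖) := by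
    have : ∀ᶠ r in 𝓝[>] (0 : ℝ), 0 < r ∧ ∀ j k,
      (j ≠ k → Disjoint ((σ j).S (ball (σ j).pt r)) ((σ k).S (ball (σ k).pt r))) ∧
      ((σ j).pt = (σ k).pt ∨ 2 * r ≤ ‖(σ j).pt - (σ k).pt‖) := by
      refine eventually_mem_nhdsWithin.and (eventually_all.2 fun j => eventually_all.2 fun k => ?_)
      refine Eventually.and ?_ ?_
      · by_cases hjk : j = k
        · exact Eventually.of_forall fun r h => absurd hjk h
        obtain ⟨V, W, hV, hjV, hW, hkW, hVW⟩ := hdist j k hjk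
        obtain ⟨δ₁, hδ₁, hb₁⟩ := Metric.isOpen_iff.1 hV _ hjV
        obtain ⟨δ₂, hδ₂, hb₂⟩ := Metric.isOpen_iff.1 hW _ hkW
        filter_upwards [hlt δ₁ hδ₁, hlt δ₂ hδ₂, eventually_mem_nhdsWithin] with r h1 h2 h3 _
        have h3' : 0 < r := h3
        refine Disjoint.mono ?_ ?_ (disjoint_iff_inter_eq_empty.2 hVW)
        · exact (σ j).mono _ _ isOpen_ball (mem_ball_self h3') hV hjV
            ((ball_subset_ball h1.le).trans hb₁)
        · exact (σ k).mono _ _ isOpen_ball (mem_ball_self h3') hW hkW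
            ((ball_subset_ball h2.le).trans hb₂)
      · by_cases h : (σ j).pt = (σ k).pt
        · exact Eventually.of_forall fun r => Or.inl h
        · have h0 : 0 < ‖(σ j).pt - (σ k).pt‖ := norm_pos_iff.2 (sub_ne_zero.2 h)
          filter_upwards [hlt (‖(σ j).pt - (σ k).pt‖ / 2) (by positivity)] with r h1
          right
          linarith
    exact this.exists
  set ε := r ^ p / 2 with hε
  have hrp : 0 < r ^ p := by positivity
  have hε0 : 0 < ε := by positivity
  -- choice of r'
  obtain ⟨r', hr', hrr, hsmall⟩ : ∃ r' : ℝ, 0 < r' ∧ r' < r ∧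
      ∀ j w, ‖w - (σ j).pt‖ ≤ r' → ‖∏ k, (w - (σ k).pt)‖ < ε := by
    have : ∀ᶠ r' in 𝓝[>] (0 : ℝ), 0 < r' ∧ r' < r ∧
      ∀ j w, ‖w - (σ j).pt‖ ≤ r' → ‖∏ k, (w - (σ k).pt)‖ < ε := by
      refine eventually_mem_nhdsWithin.and ((hlt r hr).and (eventually_all.2 fun j => ?_))
      have hc : Continuous fun w : ℂ => ‖∏ k, (w - (σ k).pt)‖ := by fun_prop
      have h0 : ‖∏ k, ((σ j).pt - (σ k).pt)‖ < ε := by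
        rw [Finset.prod_eq_zero (Finset.mem_univ j) (sub_self _)]
        simpa using hε0
      obtain ⟨δ, hδ, hb⟩ := Metric.isOpen_iff.1 (isOpen_lt hc continuous_const) (σ j).pt h0
      filter_upwards [hlt δ hδ] with r' h1 w hw
      exact hb (by rw [mem_ball, dist_eq_norm]; linarith)
    exact this.exists
  choose θ ρ0 hθ0 using fun j => exists_theta hfc (σ j) hr'
  set ρ := 1 + ∑ j, |ρ0 j| with hρ
  have hρ1 : 1 ≤ ρ := by
    have : 0 ≤ ∑ j, |ρ0 j| := Finset.sum_nonneg fun _ _ => abs_nonneg _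
    linarith
  have hρj : ∀ j, ρ0 j ≤ ρ := by
    intro j
    have h1 := Finset.single_le_sum (f := fun j => |ρ0 j|) (fun _ _ => abs_nonneg _)
      (Finset.mem_univ j)
    have h2 := le_abs_self (ρ0 j)
    linarith
  have hθ : ∀ j z, ρ < ‖z‖ → z ∉ (σ j).S (ball (σ j).pt r') →
      ContinuousWithinAt (θ j) ((σ j).S (ball (σ j).pt r'))ᶜ z ∧ Complex.exp (θ j z) = z :=
    fun j z hz hzS => hθ0 j z ((hρj j).trans_lt hz) hzS
  have hder : ∀ j z, ρ < ‖z‖ → z ∉ closure ((σ j).S (ball (σ j).pt r')) →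
      HasDerivAt (θ j) z⁻¹ z := by
    intro j z hz hzc
    have hn : ∀ᶠ w in 𝓝 z, ρ < ‖w‖ ∧ w ∉ (σ j).S (ball (σ j).pt r') := by
      filter_upwards [(isOpen_lt continuous_const continuous_norm).mem_nhds hz,
        isClosed_closure.isOpen_compl.mem_nhds hzc] with w h1 h2
      exact ⟨h1, fun h => h2 (subset_closure h)⟩
    have h1 := hθ j z hz fun h => hzc (subset_closure h)
    have := hasDerivAt_log (h := fun w => w) (h' := 1)
      (h1.1.continuousAt (hn.mono fun w hw => hw.2))
      (hn.mono fun w hw => (hθ j w hw.1 hw.2).2) (hasDerivAt_id z)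
    simpa using this
  -- choice of R
  obtain ⟨Bf, hBf⟩ := (isCompact_closedBall (0 : ℂ) ρ).exists_bound_of_continuousOn
    hfc.continuousOn
  set R := |Bf| + ∑ j, ‖(σ j).pt‖ + r' + 1 with hR
  have hsum0 : 0 ≤ ∑ j, ‖(σ j).pt‖ := Finset.sum_nonneg fun _ _ => norm_nonneg _
  have hR0 : 0 < R := by
    have := abs_nonneg Bf
    linarith
  have hWρ : ∀ z, R < ‖f z‖ → ρ < ‖z‖ := by
    intro z hz
    by_contra hle
    push Not at hle
    have h1 := hBf z (by simpa using hle)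
    have h2 := le_abs_self Bf
    linarith
  have hWc : ∀ z, R < ‖f z‖ → ∀ j, z ∉ closure ((σ j).S (ball (σ j).pt r')) := by
    intro z hz j hzc
    have h1 := S_closure_norm hfc (σ j) hr' hzc
    have h2 := Finset.single_le_sum (f := fun j => ‖(σ j).pt‖) (fun _ _ => norm_nonneg _)
      (Finset.mem_univ j)
    have h3 : ‖f z‖ ≤ ‖f z - (σ j).pt‖ + ‖(σ j).pt‖ := by
      simpa using norm_add_le (f z - (σ j).pt) (σ j).pt
    have h4 := abs_nonneg Bf
    linarith
  set W : Set ℂ := {w : ℂ | R < ‖f w‖} with hW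
  have hWo : IsOpen W := isOpen_lt continuous_const hfc.norm
  obtain ⟨z, hzW, hz⟩ := linalg W (fun z j => θ j z - θ i0 z + 1) (by
    rintro ⟨m, hm0, hm⟩
    by_cases hex : ∃ j0, i0 ≠ j0 ∧ m j0 ≠ 0
    · obtain ⟨j0, hij, hmj⟩ := hex
      exact core hf σ i0 j0 hij hr' hrr (fun j k => (hrjk j k).1) (fun j k => (hrjk j k).2) hε0
        (by rw [hε]; linarith) hsmall θ hρ1 hθ hder (R := R) m hmj hm
    · push Not at hex
      apply hm0
      obtain ⟨y, hy⟩ := hub R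
      have h1 := hm y hy
      rw [Finset.sum_eq_single i0 (fun j _ hj => by rw [hex j hj.symm, zero_mul])
        (fun h => absurd (Finset.mem_univ _) h)] at h1
      simp only [sub_self, zero_add, mul_one] at h1
      funext j
      by_cases hj : i0 = j
      · rw [← hj]; exact h1
      · exact hex j hj)
  choose τ hτ using fun i => exists_inf hf hub hR0 (hzW i)
  refine ⟨τ, fun j k hjk => ⟨R, ?_⟩⟩
  rw [hτ, hτ]
  by_contra hne
  obtain ⟨y, hy1, hy2⟩ := nonempty_iff_ne_empty.2 hne
  have hmem : z k ∈ connectedComponentIn W (z j) := by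
    rw [connectedComponentIn_eq hy1, ← connectedComponentIn_eq hy2]
    exact mem_connectedComponentIn (hzW k)
  apply hz j k hjk
  funext i
  refine const_of_hasDerivAt (s := connectedComponentIn W (z j)) hWo.connectedComponentIn
    isPreconnected_connectedComponentIn (h := fun y => θ i y - θ i0 y + 1) ?_
    (mem_connectedComponentIn (hzW j)) hmem
  intro t ht
  have htW := connectedComponentIn_subset _ _ ht
  have := ((hder i t (hWρ t htW) (hWc t htW i)).sub
    (hder i0 t (hWρ t htW) (hWc t htW i0))).add_const 1
  simpa using this

end Stmt14

/-- If an entire function `f` has at least `p ≥ 2` pairwise distinct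
transcendental singularities of `f⁻¹` over finite points, then `f⁻¹` has at
least `p` pairwise distinct transcendental singularities over `∞`.
Consequently (granting the Denjoy–Carleman–Ahlfors theorem, taken here as the
hypothesis `hDCA`), the number of finite asymptotic values of an entire
function of lower order `λ(f) ≥ 1/2` is at most `2λ(f)`. -/
theorem stmt_14 (f : ℂ → ℂ) (hf : Differentiable ℂ f)
    (p : ℕ) (hp : 2 ≤ p)
    (σ : Fin p → TranscSingOverFin f)
    (hdist : ∀ j k, j ≠ k → FinSingDistinct (σ j) (σ k)) :
    (∃ τ : Fin p → TranscSingOverInf f,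
      ∀ j k, j ≠ k → InfSingDistinct (τ j) (τ k)) ∧
    (Function.Injective (fun j => (σ j).pt) →
      (1 / 2 : ℝ) ≤ lowerOrder f →
      -- Denjoy–Carleman–Ahlfors: at most `2λ(f)` pairwise distinct direct
      -- singularities over `∞`:
      (∀ q : ℕ, (∃ τ : Fin q → TranscSingOverInf f,
          ∀ j k, j ≠ k → InfSingDistinct (τ j) (τ k)) →
        (q : ℝ) ≤ 2 * lowerOrder f) →
      (p : ℝ) ≤ 2 * lowerOrder f) := by
  have h := Stmt14.exists_tau hf hp σ hdist
  exact ⟨h, fun _ _ hDCA => hDCA p h⟩
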